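/- There is no [[n_q, n_q + n_c − 3, 2]]_2 quantum stabilizer code together with an [n_c, 1, 2]_2 classical code with n_q + n_c = n and n_c ≥ 1: the quantum Singleton bound forces n_c ≤ 1, and no [1,1,2]_2 classical code exists. Hence an [[n, n−3 : 1, 2]]_2 hybrid code cannot be obtained from the trivial construction combining a quantum code and a classical code. -/

import Mathlib

open Matrix
open scoped InnerProductSpace

/-- Single-qubit Pauli matrices, indexed by `ZMod 2`. -/
def sigmaX : Matrix (ZMod 2) (ZMod 2) ℂ := fun i j => if i = j then 0 else 1
def sigmaY : Matrix (ZMod 2) (ZMod 2) ℂ :=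
  fun i j => if i = j then 0 else if i = 0 then -Complex.I else Complex.I
def sigmaZ : Matrix (ZMod 2) (ZMod 2) ℂ :=
  fun i j => if i = j then (if i = 0 then 1 else -1) else 0

/-- The weight-one operator acting as the `2 × 2` matrix `P` on qubit `ℓ`
and as the identity elsewhere, on `n` qubits. -/
def opAt (n : ℕ) (ℓ : Fin n) (P : Matrix (ZMod 2) (ZMod 2) ℂ) :
    Matrix (Fin n → ZMod 2) (Fin n → ZMod 2) ℂ :=
  fun y z => if ∀ j, j ≠ ℓ → y j = z j then P (y ℓ) (z ℓ) else 0

/-- `isCode2 n Kdim`: there is an `((n, Kdim, 2))₂` quantum code, i.e. a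
`Kdim`-dimensional subspace of `(ℂ²)^{⊗n}` satisfying the Knill–Laflamme
conditions for all weight-one Pauli errors. -/
def isCode2 (n Kdim : ℕ) : Prop :=
  ∃ C : Submodule ℂ (EuclideanSpace ℂ (Fin n → ZMod 2)),
    Module.finrank ℂ C = Kdim ∧
    ∀ ℓ : Fin n, ∀ P ∈ ({sigmaX, sigmaY, sigmaZ} :
        Set (Matrix (ZMod 2) (ZMod 2) ℂ)),
      ∃ lam : ℂ, ∀ u ∈ C, ∀ v ∈ C,
        ⟪u, Matrix.toEuclideanLin (opAt n ℓ P) v⟫_ℂ = lam * ⟪u, v⟫_ℂ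

/-- An `[n, m, 2]₂` classical linear code: an `m`-dimensional subspace of
`𝔽₂ⁿ` all of whose nonzero codewords have Hamming weight at least `2`. -/
def isClassicalCode2 (n m : ℕ) : Prop :=
  ∃ C : Submodule (ZMod 2) (Fin n → ZMod 2),
    Module.finrank (ZMod 2) C = m ∧
    ∀ x ∈ C, x ≠ 0 → 2 ≤ (Finset.univ.filter (fun j => x j ≠ 0)).card

/-! For a code detecting every error on the subsystem `A` of `A ⊗ B ⊗ G`, adjoin a reference system
`κ` maximally entangled with the code space. By the Knill–Laflamme conditions the reduced state of
`A ⊗ κ` is a product whose second factor is maximally mixed, so the rank `r_A` of the reduced state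
of `A` satisfies `r_A * |κ| = r_{Aκ} = r_{BG} ≤ r_B * |G|`. If errors on `B` are detected as well,
then also `r_B * |κ| ≤ r_A * |G|`; adding the two inequalities and cancelling `r_A + r_B` gives
`|κ| ≤ |G|`, the quantum Singleton bound at distance two, with rank in the place of entropy.

A trivial hybrid construction would then need `n_q + n_c - 3 ≤ n_q - 2` from this bound and
`1 ≤ n_c - 1` from the classical Singleton bound, which contradict each other. -/

open scoped Kronecker ComplexOrder

section Cuts

variable {R α β γ ξ κ m n : Type*}

/-- An encoder `Ψ`, whose columns are basis code words indexed by the reference system `κ`, viewed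
as a bipartite state across the cut `α | ξκ`. Its rank is the Schmidt rank of this cut. -/
def leftCut (Ψ : Matrix (α × ξ) κ R) : Matrix α (ξ × κ) R :=
  Matrix.of fun a p => Ψ (a, p.1) p.2

/-- The encoder `Ψ` viewed as a bipartite state across the cut `ξ | ακ`. -/
def rightCut (Ψ : Matrix (α × ξ) κ R) : Matrix ξ (α × κ) R :=
  Matrix.of fun x p => Ψ (p.1, x) p.2

/-- The encoder `Ψ` with its first two subsystems exchanged, so that facts about the first subsystem
also apply to the second. -/
def swapLeft (Ψ : Matrix (α × β × γ) κ R) : Matrix (β × α × γ) κ R :=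
  Ψ.submatrix (fun p => (p.2.1, p.1, p.2.2)) id

theorem leftCut_ne_zero [Zero R] {Ψ : Matrix (α × ξ) κ R} (hΨ : Ψ ≠ 0) : leftCut Ψ ≠ 0 := by
  contrapose! hΨ
  ext ⟨a, x⟩ k
  exact congrFun₂ hΨ a (x, k)

variable [Field R]

theorem matrix_rank_pos_of_ne_zero [Fintype n] [Finite m] {M : Matrix m n R} (hM : M ≠ 0) :
    0 < M.rank := by
  classical
  have := Fintype.ofFinite m
  contrapose! hM
  rw [Nat.le_zero, Matrix.rank, Submodule.finrank_eq_zero, LinearMap.range_eq_bot] at hM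
  exact Matrix.toLin'.map_eq_zero_iff.1 hM

theorem matrix_rank_kronecker {l p : Type*} [Finite l] [Fintype m] [Finite n] [Fintype p]
    (A : Matrix l m R) (B : Matrix n p R) : (A ⊗ₖ B).rank = A.rank * B.rank := by
  classical
  have := Fintype.ofFinite l
  have := Fintype.ofFinite n
  let f := Matrix.toLin (Pi.basisFun R m) (Pi.basisFun R l) A
  let g := Matrix.toLin (Pi.basisFun R p) (Pi.basisFun R n) B
  have hrange : LinearMap.range (TensorProduct.map f g) =
      LinearMap.range (TensorProduct.mapIncl (LinearMap.range f) (LinearMap.range g)) := by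
    rw [TensorProduct.range_map, TensorProduct.range_mapIncl]
  rw [rank_eq_finrank_range_toLin (A ⊗ₖ B) ((Pi.basisFun R l).tensorProduct (Pi.basisFun R n))
      ((Pi.basisFun R m).tensorProduct (Pi.basisFun R p)), toLin_kronecker, hrange,
    LinearMap.finrank_range_of_inj
      (Module.Flat.tensorProduct_mapIncl_injective_of_right (LinearMap.range f) _),
    Module.finrank_tensorProduct,
    rank_eq_finrank_range_toLin A (Pi.basisFun R l) (Pi.basisFun R m),
    rank_eq_finrank_range_toLin B (Pi.basisFun R n) (Pi.basisFun R p)]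

theorem rank_le_rank_leftCut_mul_card [Finite α] [Fintype ξ] [Fintype κ]
    (Ψ : Matrix (α × ξ) κ R) : Ψ.rank ≤ (leftCut Ψ).rank * Fintype.card ξ := by
  classical
  -- `D` contracts the `ξ` of the cut `α | ξκ` with one index of the identity; the other stays free.
  let D : Matrix ((ξ × κ) × ξ) κ R :=
    Matrix.of fun p k => if p.1.1 = p.2 then if p.1.2 = k then 1 else 0 else 0
  have hΨ : Ψ = (leftCut Ψ ⊗ₖ (1 : Matrix ξ ξ R)) * D := by
    ext ⟨a, x⟩ k
    simp [leftCut, D, Matrix.mul_apply, Fintype.sum_prod_type, Matrix.one_apply]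
  calc Ψ.rank = ((leftCut Ψ ⊗ₖ (1 : Matrix ξ ξ R)) * D).rank := by rw [← hΨ]
    _ ≤ (leftCut Ψ ⊗ₖ (1 : Matrix ξ ξ R)).rank := rank_mul_le_left _ _
    _ = (leftCut Ψ).rank * Fintype.card ξ := by rw [matrix_rank_kronecker, rank_one]

theorem rank_rightCut_le_rank_leftCut_swapLeft_mul_card
    [Fintype α] [Finite β] [Fintype γ] [Fintype κ] (Ψ : Matrix (α × β × γ) κ R) :
    (rightCut Ψ).rank ≤ (leftCut (swapLeft Ψ)).rank * Fintype.card γ := by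
  let e : γ × α × κ ≃ (α × γ) × κ :=
    (Equiv.prodAssoc γ α κ).symm.trans ((Equiv.prodComm γ α).prodCongr (Equiv.refl κ))
  have he : leftCut (rightCut Ψ) = (leftCut (swapLeft Ψ)).submatrix (Equiv.refl β) e := rfl
  rw [← rank_submatrix _ (Equiv.refl β) e, ← he]
  exact rank_le_rank_leftCut_mul_card _

end Cuts

section Detection

variable {R α β γ ξ κ : Type*} [Field R] [StarRing R]

/-- The Knill–Laflamme conditions for all errors on the first subsystem `α`, for the code spanned by
the columns of `Ψ`. The case `P = 1` makes `Ψ` a multiple of an isometry. -/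
def DetectsLeftErrors [Fintype α] [Fintype ξ] [DecidableEq ξ] [DecidableEq κ]
    (Ψ : Matrix (α × ξ) κ R) : Prop :=
  ∀ P : Matrix α α R, ∃ c : R, Ψᴴ * (P ⊗ₖ (1 : Matrix ξ ξ R)) * Ψ = c • (1 : Matrix κ κ R)

variable [Fintype ξ]

theorem conjTranspose_rightCut_mul_rightCut_apply [Fintype α] [DecidableEq α] [DecidableEq ξ]
    (Ψ : Matrix (α × ξ) κ R) (a b : α) (k l : κ) :
    ((rightCut Ψ)ᴴ * rightCut Ψ) (a, k) (b, l) =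
      (Ψᴴ * (Matrix.single a b (1 : R) ⊗ₖ (1 : Matrix ξ ξ R)) * Ψ) k l := by
  simp [rightCut, Matrix.mul_apply, Fintype.sum_prod_type, Matrix.one_apply, Matrix.single_apply,
    ite_and, ite_mul, Finset.sum_ite_irrel]

variable [DecidableEq κ]

theorem DetectsLeftErrors.exists_conjTranspose_rightCut_mul_rightCut_eq_kronecker_one
    [Fintype α] [DecidableEq ξ] {Ψ : Matrix (α × ξ) κ R} (h : DetectsLeftErrors Ψ) :
    ∃ ρ : Matrix α α R, (rightCut Ψ)ᴴ * rightCut Ψ = ρ ⊗ₖ (1 : Matrix κ κ R) := by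
  classical
  choose ρ hρ using fun a b => h (Matrix.single a b 1)
  refine ⟨Matrix.of ρ, ?_⟩
  ext ⟨a, k⟩ ⟨b, l⟩
  rw [conjTranspose_rightCut_mul_rightCut_apply, hρ]
  rfl

theorem leftCut_mul_conjTranspose_leftCut [Fintype κ] {Ψ : Matrix (α × ξ) κ R} {ρ : Matrix α α R}
    (hρ : (rightCut Ψ)ᴴ * rightCut Ψ = ρ ⊗ₖ (1 : Matrix κ κ R)) :
    leftCut Ψ * (leftCut Ψ)ᴴ = (Fintype.card κ : R) • ρᵀ := by
  ext a b
  calc (leftCut Ψ * (leftCut Ψ)ᴴ) a b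
      = ∑ k, ((rightCut Ψ)ᴴ * rightCut Ψ) (b, k) (a, k) := by
        simp only [leftCut, rightCut, Matrix.mul_apply, Fintype.sum_prod_type_right, mul_comm]
        rfl
    _ = ((Fintype.card κ : R) • ρᵀ) a b := by simp [hρ]

variable [PartialOrder R] [StarOrderedRing R] [Fintype α] [Fintype κ]

theorem DetectsLeftErrors.rank_leftCut_mul_card_le [DecidableEq ξ] {Ψ : Matrix (α × ξ) κ R}
    (h : DetectsLeftErrors Ψ) : (leftCut Ψ).rank * Fintype.card κ ≤ (rightCut Ψ).rank := by
  classical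
  obtain ⟨ρ, hρ⟩ := h.exists_conjTranspose_rightCut_mul_rightCut_eq_kronecker_one
  have hle : (leftCut Ψ).rank ≤ ρ.rank := by
    rw [← rank_self_mul_conjTranspose, leftCut_mul_conjTranspose_leftCut hρ, ← rank_transpose ρ,
      smul_eq_diagonal_mul]
    exact rank_mul_le_right _ _
  calc (leftCut Ψ).rank * Fintype.card κ
      ≤ ρ.rank * Fintype.card κ := by gcongr
    _ = (ρ ⊗ₖ (1 : Matrix κ κ R)).rank := by rw [matrix_rank_kronecker, rank_one]
    _ = (rightCut Ψ).rank := by rw [← hρ, rank_conjTranspose_mul_self]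

theorem DetectsLeftErrors.card_le_card [DecidableEq ξ] {Ψ : Matrix (α × ξ) κ R}
    (h : DetectsLeftErrors Ψ) (hΨ : Ψ ≠ 0) : Fintype.card κ ≤ Fintype.card ξ :=
  calc Fintype.card κ ≤ (leftCut Ψ).rank * Fintype.card κ :=
        Nat.le_mul_of_pos_left _ (matrix_rank_pos_of_ne_zero (leftCut_ne_zero hΨ))
    _ ≤ (rightCut Ψ).rank := h.rank_leftCut_mul_card_le
    _ ≤ Fintype.card ξ := rank_le_card_height _

theorem card_le_card_of_detectsLeftErrors_swapLeft [Fintype β] [Fintype γ] [DecidableEq α]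
    [DecidableEq β] [DecidableEq γ] {Ψ : Matrix (α × β × γ) κ R} (hΨ : Ψ ≠ 0)
    (hα : DetectsLeftErrors Ψ) (hβ : DetectsLeftErrors (swapLeft Ψ)) :
    Fintype.card κ ≤ Fintype.card γ := by
  have hαβ : (leftCut Ψ).rank * Fintype.card κ ≤
      (leftCut (swapLeft Ψ)).rank * Fintype.card γ :=
    hα.rank_leftCut_mul_card_le.trans (rank_rightCut_le_rank_leftCut_swapLeft_mul_card Ψ)
  have hβα : (leftCut (swapLeft Ψ)).rank * Fintype.card κ ≤
      (leftCut Ψ).rank * Fintype.card γ :=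
    hβ.rank_leftCut_mul_card_le.trans
      (rank_rightCut_le_rank_leftCut_swapLeft_mul_card (swapLeft Ψ))
  have hpos := matrix_rank_pos_of_ne_zero (leftCut_ne_zero hΨ)
  refine le_of_mul_le_mul_left (a := (leftCut Ψ).rank + (leftCut (swapLeft Ψ)).rank) ?_
    (by positivity)
  linarith

end Detection

section QubitCodes

theorem exists_eq_pauli_combination (P : Matrix (ZMod 2) (ZMod 2) ℂ) :
    ∃ w x y z : ℂ, P = w • 1 + x • sigmaX + y • sigmaY + z • sigmaZ := by
  refine ⟨(P 0 0 + P 1 1) / 2, (P 0 1 + P 1 0) / 2, Complex.I * (P 0 1 - P 1 0) / 2,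
    (P 0 0 - P 1 1) / 2, ?_⟩
  have hbit : ∀ c : ZMod 2, c = 0 ∨ c = 1 := by decide
  ext i j
  rcases hbit i with rfl | rfl <;> rcases hbit j with rfl | rfl <;>
    simp only [Matrix.add_apply, Matrix.smul_apply, Matrix.one_apply, smul_eq_mul, sigmaX, sigmaY,
      sigmaZ, reduceIte, zero_ne_one, one_ne_zero]
  · ring
  · linear_combination (P 0 1 - P 1 0) / 2 * Complex.I_mul_I
  · linear_combination (P 1 0 - P 0 1) / 2 * Complex.I_mul_I
  · ring

variable {n : ℕ} {ξ κ : Type*}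

section opAt

variable (ℓ : Fin n)

theorem opAt_add (P Q : Matrix (ZMod 2) (ZMod 2) ℂ) :
    opAt n ℓ (P + Q) = opAt n ℓ P + opAt n ℓ Q := by
  ext y z
  simp only [opAt, Matrix.add_apply]
  split_ifs <;> simp

theorem opAt_smul (c : ℂ) (P : Matrix (ZMod 2) (ZMod 2) ℂ) :
    opAt n ℓ (c • P) = c • opAt n ℓ P := by
  ext y z
  simp [opAt]

theorem opAt_one : opAt n ℓ 1 = 1 := by
  ext y z
  have hyz : y = z ↔ (∀ j, j ≠ ℓ → y j = z j) ∧ y ℓ = z ℓ := by grind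
  simp only [opAt, Matrix.one_apply, hyz, ite_and]

theorem opAt_submatrix_eq_kronecker_one [DecidableEq ξ] (e : ZMod 2 × ξ ≃ (Fin n → ZMod 2))
    (he₁ : ∀ p, e p ℓ = p.1) (he₂ : ∀ p q, (∀ j, j ≠ ℓ → e p j = e q j) ↔ p.2 = q.2)
    (P : Matrix (ZMod 2) (ZMod 2) ℂ) :
    (opAt n ℓ P).submatrix e e = P ⊗ₖ (1 : Matrix ξ ξ ℂ) := by
  ext p q
  simp [opAt, he₁, he₂, Matrix.one_apply]

end opAt

theorem conjTranspose_mul_mul_apply_eq_inner {ι : Type*} [Fintype ι] [DecidableEq ι]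
    (f : κ → EuclideanSpace ℂ ι) (T : Matrix ι ι ℂ) (k l : κ) :
    ((Matrix.of fun y k => f k y)ᴴ * T * (Matrix.of fun y k => f k y)) k l =
      ⟪f k, Matrix.toEuclideanLin T (f l)⟫_ℂ := by
  rw [EuclideanSpace.inner_eq_star_dotProduct, Matrix.mul_assoc, Matrix.mul_apply, dotProduct_comm]
  rfl

variable [DecidableEq κ]

/-- The Knill–Laflamme conditions for all errors on qubit `ℓ`, for the code spanned by the columns
of `Ψ`. -/
def DetectsErrorsAt (ℓ : Fin n) (Ψ : Matrix (Fin n → ZMod 2) κ ℂ) : Prop :=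
  ∀ P, ∃ c : ℂ, Ψᴴ * opAt n ℓ P * Ψ = c • (1 : Matrix κ κ ℂ)

theorem detectsErrorsAt_of_pauli {ℓ : Fin n} {Ψ : Matrix (Fin n → ZMod 2) κ ℂ}
    (hΨ : Ψᴴ * Ψ = 1)
    (h : ∀ P ∈ ({sigmaX, sigmaY, sigmaZ} : Set (Matrix (ZMod 2) (ZMod 2) ℂ)),
      ∃ c : ℂ, Ψᴴ * opAt n ℓ P * Ψ = c • (1 : Matrix κ κ ℂ)) : DetectsErrorsAt ℓ Ψ := by
  intro P
  obtain ⟨w, x, y, z, rfl⟩ := exists_eq_pauli_combination P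
  obtain ⟨cx, hx⟩ := h sigmaX (by simp)
  obtain ⟨cy, hy⟩ := h sigmaY (by simp)
  obtain ⟨cz, hz⟩ := h sigmaZ (by simp)
  refine ⟨w + x * cx + y * cy + z * cz, ?_⟩
  simp only [opAt_add, opAt_smul, opAt_one, Matrix.mul_add, Matrix.add_mul, Matrix.mul_smul,
    Matrix.smul_mul, Matrix.mul_one, hΨ, hx, hy, hz]
  module

theorem DetectsErrorsAt.detectsLeftErrors [Fintype ξ] [DecidableEq ξ] {ℓ : Fin n}
    {Ψ : Matrix (Fin n → ZMod 2) κ ℂ} (h : DetectsErrorsAt ℓ Ψ)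
    (e : ZMod 2 × ξ ≃ (Fin n → ZMod 2))
    (he₁ : ∀ p, e p ℓ = p.1) (he₂ : ∀ p q, (∀ j, j ≠ ℓ → e p j = e q j) ↔ p.2 = q.2) :
    DetectsLeftErrors (Ψ.submatrix e id) := by
  intro P
  obtain ⟨c, hc⟩ := h P
  refine ⟨c, ?_⟩
  rw [← opAt_submatrix_eq_kronecker_one ℓ e he₁ he₂, conjTranspose_submatrix, submatrix_mul_equiv,
    submatrix_mul_equiv, hc]
  rfl

variable [Fintype κ]

theorem card_le_two_pow_of_detectsErrorsAt_zero {Ψ : Matrix (Fin (n + 1) → ZMod 2) κ ℂ}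
    (hΨ : Ψ ≠ 0) (h₀ : DetectsErrorsAt 0 Ψ) : Fintype.card κ ≤ 2 ^ n := by
  let e : ZMod 2 × (Fin n → ZMod 2) ≃ (Fin (n + 1) → ZMod 2) := Fin.consEquiv fun _ => ZMod 2
  have hΨ' : Ψ.submatrix e id ≠ 0 :=
    (Matrix.reindex e.symm (Equiv.refl κ)).injective.ne hΨ
  have hleft := h₀.detectsLeftErrors e (by simp [e]) (by simp [e, Fin.forall_fin_succ, funext_iff])
  simpa using hleft.card_le_card hΨ'

theorem card_le_two_pow_of_detectsErrorsAt_zero_one {Ψ : Matrix (Fin (n + 2) → ZMod 2) κ ℂ}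
    (hΨ : Ψ ≠ 0) (h₀ : DetectsErrorsAt 0 Ψ) (h₁ : DetectsErrorsAt 1 Ψ) :
    Fintype.card κ ≤ 2 ^ n := by
  let e : ZMod 2 × ZMod 2 × (Fin n → ZMod 2) ≃ (Fin (n + 2) → ZMod 2) :=
    ((Equiv.refl _).prodCongr (Fin.consEquiv fun _ => ZMod 2)).trans
      (Fin.consEquiv fun _ => ZMod 2)
  let s : ZMod 2 × ZMod 2 × (Fin n → ZMod 2) ≃ ZMod 2 × ZMod 2 × (Fin n → ZMod 2) :=
    ⟨fun p => (p.2.1, p.1, p.2.2), fun p => (p.2.1, p.1, p.2.2), fun _ => rfl, fun _ => rfl⟩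
  have hΨ' : Ψ.submatrix e id ≠ 0 :=
    (Matrix.reindex e.symm (Equiv.refl κ)).injective.ne hΨ
  have hleft : DetectsLeftErrors (Ψ.submatrix e id) :=
    h₀.detectsLeftErrors e (by simp [e]) (by simp [e, Fin.forall_fin_succ, funext_iff])
  have hswap : DetectsLeftErrors (swapLeft (Ψ.submatrix e id)) :=
    h₁.detectsLeftErrors (s.trans e) (by simp [e, s])
      (by simp [e, s, Fin.forall_fin_succ, funext_iff, Fin.succ_succ_ne_one])
  simpa using card_le_card_of_detectsLeftErrors_swapLeft hΨ' hleft hswap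

theorem isCode2.exists_encoder {n K : ℕ} (h : isCode2 n K) :
    ∃ Ψ : Matrix (Fin n → ZMod 2) (Fin K) ℂ, Ψᴴ * Ψ = 1 ∧ ∀ ℓ, DetectsErrorsAt ℓ Ψ := by
  obtain ⟨C, rfl, hKL⟩ := h
  let b := stdOrthonormalBasis ℂ C
  let f k : EuclideanSpace ℂ (Fin n → ZMod 2) := b k
  have hf (k l) : ⟪f k, f l⟫_ℂ = (1 : Matrix (Fin (Module.finrank ℂ C)) _ ℂ) k l :=
    orthonormal_iff_ite.1 b.orthonormal k l
  have hΨ : (Matrix.of fun y k => f k y)ᴴ * (Matrix.of fun y k => f k y) = 1 := by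
    ext k l
    simpa [hf] using conjTranspose_mul_mul_apply_eq_inner f 1 k l
  refine ⟨Matrix.of fun y k => f k y, hΨ, fun ℓ => detectsErrorsAt_of_pauli hΨ fun P hP => ?_⟩
  obtain ⟨c, hc⟩ := hKL ℓ P hP
  refine ⟨c, ?_⟩
  ext k l
  rw [conjTranspose_mul_mul_apply_eq_inner, hc _ (b k).2 _ (b l).2, hf, Matrix.smul_apply,
    smul_eq_mul]

theorem isCode2.le_two_pow_sub_two {n K : ℕ} (h : isCode2 n K) : K ≤ 2 ^ (n - 2) := by
  obtain rfl | hK := K.eq_zero_or_pos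
  · exact Nat.zero_le _
  obtain ⟨Ψ, hisometry, hdet⟩ := h.exists_encoder
  have hΨ : Ψ ≠ 0 := by
    have : Nonempty (Fin K) := ⟨⟨0, hK⟩⟩
    rintro rfl
    simp at hisometry
  match n with
  | 0 =>
    obtain ⟨C, rfl, -⟩ := h
    simpa using C.finrank_le
  | 1 => simpa using card_le_two_pow_of_detectsErrorsAt_zero hΨ (hdet 0)
  | n + 2 => simpa using card_le_two_pow_of_detectsErrorsAt_zero_one hΨ (hdet 0) (hdet 1)

end QubitCodes

section ClassicalCodes

theorem finrank_le_card_sub_of_forall_lt_hammingNorm {F ι : Type*} [Field F] [DecidableEq F]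
    [Fintype ι] {C : Submodule F (ι → F)} {d : ℕ} (hC : ∀ x ∈ C, x ≠ 0 → d < hammingNorm x) :
    Module.finrank F C ≤ Fintype.card ι - d := by
  obtain ⟨T, -, hT⟩ := Finset.exists_subset_card_eq
    (s := (Finset.univ : Finset ι)) (Nat.sub_le (Fintype.card ι) d)
  let π : C →ₗ[F] (T → F) := (LinearMap.funLeft F F Subtype.val).comp C.subtype
  have hπ : Function.Injective π := by
    refine (injective_iff_map_eq_zero π).2 fun x hx => ?_
    classical
    by_contra hx₀
    have hsupp : Finset.univ.filter (fun i => x.1 i ≠ 0) ⊆ Tᶜ := fun i hi => by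
      rw [Finset.mem_compl]
      exact fun hiT => (Finset.mem_filter.1 hi).2 (congrFun hx ⟨i, hiT⟩)
    have hcard := Finset.card_le_card hsupp
    rw [Finset.card_compl, hT] at hcard
    have := hC x x.2 (by simpa using hx₀)
    rw [hammingNorm] at this
    omega
  simpa [hT] using LinearMap.finrank_le_finrank_of_injective hπ

theorem isClassicalCode2.le_sub_one {n m : ℕ} (h : isClassicalCode2 n m) : m ≤ n - 1 := by
  obtain ⟨C, rfl, hC⟩ := h
  simpa using finrank_le_card_sub_of_forall_lt_hammingNorm hC

end ClassicalCodes

/-- there is no `[[n_q, n_q + n_c − 3, 2]]₂` quantum code together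
with an `[n_c, 1, 2]₂` classical code where `n_q + n_c = n` and `n_c ≥ 1` (and
the quantum code encodes at least one logical qubit, `n_q + n_c − 3 ≥ 1`):
the quantum Singleton bound forces `n_c ≤ 1`, and no `[1,1,2]₂` classical code
exists.  Hence an `[[n, n−3 : 1, 2]]₂` hybrid code cannot arise from the trivial
construction combining a quantum code with a classical code. -/
theorem stmt_12 (n nq nc : ℕ) (hn : nq + nc = n) (hnc : 1 ≤ nc)
    (hk : 1 ≤ nq + nc - 3) :
    ¬ (isCode2 nq (2 ^ (nq + nc - 3)) ∧ isClassicalCode2 nc 1) := by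
  rintro ⟨hq, hc⟩
  have hnc₂ : 1 ≤ nc - 1 := hc.le_sub_one
  have hnq : nq + nc - 3 ≤ nq - 2 := (Nat.pow_le_pow_iff_right one_lt_two).1 hq.le_two_pow_sub_two
  omega
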